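/- Every class of finite pointed (Π,I)-Kripke models recognizable by a counting multichannel message passing automaton is definable by a countable disjunction of GMML formulae: the disjunction of all full graded multimodal types τ_n^{(M,w)} such that the automaton accepts (M,w) in round n defines exactly the recognized class. -/

import Mathlib

/-- Syntax of graded multimodal logic over propositions `P` and indices `I`. -/
inductive GMML (P : Type) (I : Type) : Type
  | top : GMML P I
  | prop : P → GMML P I
  | neg : GMML P I → GMML P I
  | and : GMML P I → GMML P I → GMML P I
  | dia : I → ℕ → GMML P I → GMML P I

/-- Satisfaction of a GMML formula at a point of a Kripke model. -/
def GMML.Sat {P I W : Type} (R : I → W → W → Prop) (V : P → W → Prop) :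
    W → GMML P I → Prop
  | _, .top => True
  | w, .prop p => V p w
  | w, .neg φ => ¬ GMML.Sat R V w φ
  | w, .and φ ψ => GMML.Sat R V w φ ∧ GMML.Sat R V w ψ
  | w, .dia α k φ => k ≤ {v | R α w v ∧ GMML.Sat R V v φ}.ncard

/-- Modal depth of a GMML formula. -/
def GMML.md {P I : Type} : GMML P I → ℕ
  | .top => 0
  | .prop _ => 0
  | .neg φ => φ.md
  | .and φ ψ => max φ.md ψ.md
  | .dia _ _ φ => φ.md + 1

/-- A finite pointed Kripke model of vocabulary `(P, I)`. -/
structure PKModel (P I : Type) where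
  W : Type
  fin : Finite W
  R : I → W → W → Prop
  V : P → W → Prop
  pt : W

/-- Satisfaction at the distinguished point of a pointed model. -/
def PKModel.Sat {P I : Type} (M : PKModel P I) (φ : GMML P I) : Prop :=
  GMML.Sat M.R M.V M.pt φ

/-- Finite conjunction of a list of formulae. -/
def GMML.bigAnd {P I : Type} : List (GMML P I) → GMML P I
  | [] => .top
  | φ :: l => .and φ (GMML.bigAnd l)

/-- Exact-count modality `⟨α⟩_{=k} φ := ⟨α⟩_{≥k} φ ∧ ¬⟨α⟩_{≥k+1} φ`. -/
def GMML.diaEq {P I : Type} (α : I) (k : ℕ) (φ : GMML P I) : GMML P I :=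
  .and (.dia α k φ) (.neg (.dia α (k + 1) φ))

open Classical in
/-- The depth-0 type: the conjunction specifying exactly which propositions hold. -/
noncomputable def type0 {P I W : Type} [Fintype P] (V : P → W → Prop) (w : W) :
    GMML P I :=
  GMML.bigAnd ((Finset.univ : Finset P).toList.map fun p =>
    if V p w then .prop p else .neg (.prop p))

open Classical in
/-- The finset of `α`-successors of `w`. -/
noncomputable def succs {I W : Type} [Fintype W] (R : I → W → W → Prop)
    (α : I) (w : W) : Finset W :=
  Finset.univ.filter fun v => R α w v

open Classical in
/-- The full graded multimodal `(P, I)`-type of modal depth `n` of a pointed model: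
it records the propositional information and, recursively, for each `α ∈ I`
the exact number of `α`-successors satisfying each full type of depth `n`
(together with the exact out-degree). -/
noncomputable def fullType {P I W : Type} [Fintype P] [Fintype I] [Fintype W]
    (R : I → W → W → Prop) (V : P → W → Prop) : ℕ → W → GMML P I
  | 0, w => type0 V w
  | n + 1, w =>
      .and (type0 V w)
        (GMML.bigAnd ((Finset.univ : Finset I).toList.flatMap fun α =>
          .dia α 0 (fullType R V n w) ::
          GMML.diaEq α (succs R α w).card .top ::
          (((succs R α w).image (fullType R V n)).toList.map fun σ =>
            GMML.diaEq α
              ((succs R α w).filter fun v => fullType R V n v = σ).card σ)))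

/-- The full type of modal depth `n` at an arbitrary point of a pointed model. -/
noncomputable def PKModel.fullTypeAt {P I : Type} [Fintype P] [Fintype I]
    (M : PKModel P I) (n : ℕ) (w : M.W) : GMML P I :=
  haveI := M.fin
  letI : Fintype M.W := Fintype.ofFinite M.W
  fullType M.R M.V n w

/-- The full graded multimodal type of modal depth `n` of the pointed model. -/
noncomputable def PKModel.fullType {P I : Type} [Fintype P] [Fintype I]
    (M : PKModel P I) (n : ℕ) : GMML P I :=
  M.fullTypeAt n M.pt

/-- A counting multichannel message passing automaton for `(P, I)` with states `Q`. -/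
structure CMMPA (P I Q : Type) where
  π : Set P → Q
  δ : (I → Multiset Q) → Q → Q
  F : Set Q

open Classical in
/-- The run of a CMMPA on a Kripke model: `run A R V t w` is the state of node `w`
in round `t`; in each round a node receives the multiset of previous states of its
`α`-successors along each channel `α`. -/
noncomputable def CMMPA.run {P I Q W : Type} [Fintype W] (A : CMMPA P I Q)
    (R : I → W → W → Prop) (V : P → W → Prop) : ℕ → W → Q
  | 0, w => A.π {p | V p w}
  | t + 1, w =>
      A.δ (fun α =>
        ((Finset.univ : Finset W).filter fun v => R α w v).val.map
          (CMMPA.run A R V t))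
        (CMMPA.run A R V t w)

/-- The run of a CMMPA on a finite pointed Kripke model. -/
noncomputable def PKModel.run {P I Q : Type} (M : PKModel P I) (A : CMMPA P I Q)
    (t : ℕ) (w : M.W) : Q :=
  haveI := M.fin
  letI : Fintype M.W := Fintype.ofFinite M.W
  A.run M.R M.V t w

/-!
The state of an automaton in round `n` depends only on the depth-`n` tree unfolding, up to
isomorphism. The full type of depth `n` is itself computed in `n` rounds by an automaton, so it too
depends only on the unfolding. Conversely, by induction on `n`, a full type pins down the unfolding:
it gives the exact number of successors with each unfolding that occurs, and the exact out-degree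
rules out any other.
-/

namespace GMML

variable {P I : Type}

/-- A Gödel numbering of formulae, relative to numberings `f` of the propositions and `g` of the
indices. -/
def code (f : P → ℕ) (g : I → ℕ) : GMML P I → ℕ
  | .top => Nat.pair 0 0
  | .prop p => Nat.pair 1 (f p)
  | .neg φ => Nat.pair 2 (φ.code f g)
  | .and φ ψ => Nat.pair 3 (Nat.pair (φ.code f g) (ψ.code f g))
  | .dia α k φ => Nat.pair 4 (Nat.pair (g α) (Nat.pair k (φ.code f g)))

theorem code_injective {f : P → ℕ} {g : I → ℕ} (hf : f.Injective) (hg : g.Injective) :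
    (code f g).Injective := by
  intro φ
  induction φ <;> intro ψ h <;> cases ψ <;> grind [code, Nat.pair_eq_pair, Function.Injective]

instance [Countable P] [Countable I] : Countable (GMML P I) := by
  obtain ⟨f, hf⟩ := exists_injective_nat P
  obtain ⟨g, hg⟩ := exists_injective_nat I
  exact (code_injective hf hg).countable

variable {W : Type} (R : I → W → W → Prop) (V : P → W → Prop) (w : W)

theorem sat_bigAnd (l : List (GMML P I)) : Sat R V w (bigAnd l) ↔ ∀ φ ∈ l, Sat R V w φ := by
  induction l with
  | nil => simp [bigAnd, Sat]
  | cons φ l ih => simp [bigAnd, Sat, ih]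

theorem sat_diaEq (α : I) (k : ℕ) (φ : GMML P I) :
    Sat R V w (diaEq α k φ) ↔ {v | R α w v ∧ Sat R V v φ}.ncard = k := by
  simp only [diaEq, Sat]
  omega

end GMML

theorem sat_type0 {P I W W' : Type} [Fintype P] (R : I → W → W → Prop) (V : P → W → Prop)
    (V' : P → W' → Prop) (w : W) (v : W') :
    GMML.Sat R V w (type0 V' v) ↔ {p | V p w} = {p | V' p v} := by
  simp only [type0, GMML.sat_bigAnd, List.forall_mem_map, Finset.mem_toList, Finset.mem_univ,
    true_imp_iff, Set.ext_iff, Set.mem_ofPred_eq]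
  refine forall_congr' fun p => ?_
  by_cases hp : V' p v <;> simp [hp, GMML.Sat]

theorem ncard_rel_and_eq_card_filter_succs {I W : Type} [Fintype W] (R : I → W → W → Prop)
    (α : I) (w : W) (q : W → Prop) [DecidablePred q] :
    {v | R α w v ∧ q v}.ncard = ((succs R α w).filter q).card := by
  rw [← Set.ncard_coe_finset]
  congr 1
  ext v
  simp [succs]

theorem count_map_val {ι β : Type*} [DecidableEq β] (s : Finset ι) (f : ι → β) (b : β) :
    (s.val.map f).count b = (s.filter fun i => f i = b).card := by
  simp only [Multiset.count_map, eq_comm (a := b), Finset.card_def, Finset.filter_val]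

theorem multiset_eq_iff_card_eq_and_count_eq {β : Type*} [DecidableEq β] {s t : Multiset β} :
    s = t ↔ s.card = t.card ∧ ∀ b ∈ t, s.count b = t.count b := by
  refine ⟨by rintro rfl; simp, fun ⟨hcard, hcount⟩ => ?_⟩
  have hle : t ≤ s := Multiset.le_iff_count.2 fun b => by
    by_cases hb : b ∈ t
    · exact (hcount b hb).ge
    · simp [Multiset.count_eq_zero_of_notMem hb]
  exact (Multiset.eq_of_le_of_card_le hle hcard.le).symm

/-- The isomorphism types of depth-`n` tree unfoldings: the propositions at the root and, for each
index, the multiset of unfoldings of depth `n - 1` below it. -/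
def Unfolding (P I : Type) : ℕ → Type
  | 0 => Set P
  | n + 1 => Set P × (I → Multiset (Unfolding P I n))

/-- The restriction of an unfolding to its first `n` levels. -/
def Unfolding.truncate {P I : Type} : (n : ℕ) → Unfolding P I (n + 1) → Unfolding P I n
  | 0, (S, _) => S
  | n + 1, (S, N) => (S, fun α => (N α).map (truncate n))

/-- The depth-`n` unfolding of a Kripke model at a point. -/
noncomputable def unfolding {P I W : Type} [Fintype W] (R : I → W → W → Prop)
    (V : P → W → Prop) : (n : ℕ) → W → Unfolding P I n
  | 0, w => {p | V p w}
  | n + 1, w => ({p | V p w}, fun α => (succs R α w).val.map (unfolding R V n))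

/-- The state that an automaton reaches in round `n` at the root of a depth-`n` unfolding. -/
def CMMPA.runUnfolding {P I Q : Type} (A : CMMPA P I Q) : (n : ℕ) → Unfolding P I n → Q
  | 0, S => A.π S
  | n + 1, (S, N) =>
      A.δ (fun α => (N α).map (A.runUnfolding n)) (A.runUnfolding n (.truncate n (S, N)))

open Classical in
/-- An automaton whose state in round `n` is the full type of modal depth `n`, paired with the set
of true propositions since every full type contains the depth-0 type; acceptance is irrelevant. -/
noncomputable def fullTypeAutomaton (P I : Type) [Fintype P] [Fintype I] :
    CMMPA P I (Set P × GMML P I) where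
  π S := (S, type0 (fun p T => p ∈ T) S)
  δ N q :=
    (q.1, .and (type0 (fun p T => p ∈ T) q.1)
      (GMML.bigAnd ((Finset.univ : Finset I).toList.flatMap fun α =>
        .dia α 0 q.2 ::
        GMML.diaEq α (N α).card .top ::
        ((N α).map Prod.snd).toFinset.toList.map fun σ =>
          GMML.diaEq α (((N α).map Prod.snd).count σ) σ)))
  F := ∅

section

variable {P I W W' : Type} [Fintype W] [Fintype W'] (R : I → W → W → Prop) (V : P → W → Prop)
  (R' : I → W' → W' → Prop) (V' : P → W' → Prop)

theorem truncate_unfolding (n : ℕ) (w : W) :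
    (unfolding R V (n + 1) w).truncate = unfolding R V n w := by
  induction n generalizing w with
  | zero => rfl
  | succ n ih =>
    exact Prod.ext rfl <| funext fun α =>
      (Multiset.map_map ..).trans <| Multiset.map_congr rfl fun v _ => ih v

variable {R V R' V'} in
theorem unfolding_succ_eq_iff {n : ℕ} {w : W} {v : W'} :
    unfolding R V (n + 1) w = unfolding R' V' (n + 1) v ↔
      {p | V p w} = {p | V' p v} ∧ ∀ α, (succs R α w).val.map (unfolding R V n) =
        (succs R' α v).val.map (unfolding R' V' n) :=
  Prod.ext_iff.trans (and_congr_right' funext_iff)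

theorem CMMPA.run_succ {Q : Type} (A : CMMPA P I Q) (n : ℕ) (w : W) :
    A.run R V (n + 1) w =
      A.δ (fun α => (succs R α w).val.map (A.run R V n)) (A.run R V n w) :=
  rfl

theorem CMMPA.run_eq_runUnfolding {Q : Type} (A : CMMPA P I Q) (n : ℕ) (w : W) :
    A.run R V n w = A.runUnfolding n (unfolding R V n w) := by
  induction n generalizing w with
  | zero => rfl
  | succ n ih =>
    have hrun : A.run R V n = A.runUnfolding n ∘ unfolding R V n := funext ih
    calc A.run R V (n + 1) w
        = A.δ (fun α => ((succs R α w).val.map (unfolding R V n)).map (A.runUnfolding n))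
            (A.runUnfolding n (unfolding R V (n + 1) w).truncate) := by
          simp only [run_succ, hrun, Multiset.map_map, truncate_unfolding, Function.comp_apply]
      _ = A.runUnfolding (n + 1) (unfolding R V (n + 1) w) := rfl

variable {R V R' V'} in
theorem CMMPA.run_eq_of_unfolding_eq {Q : Type} (A : CMMPA P I Q) {n : ℕ} {w : W} {v : W'}
    (h : unfolding R V n w = unfolding R' V' n v) : A.run R V n w = A.run R' V' n v := by
  rw [run_eq_runUnfolding, run_eq_runUnfolding, h]

variable [Fintype P] [Fintype I]

theorem run_fullTypeAutomaton (n : ℕ) (w : W) :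
    (fullTypeAutomaton P I).run R V n w = ({p | V p w}, fullType R V n w) := by
  classical
  induction n generalizing w with
  | zero => rfl
  | succ n ih =>
    have hrun : (fullTypeAutomaton P I).run R V n = fun v => ({p | V p v}, fullType R V n v) :=
      funext ih
    rw [CMMPA.run_succ, hrun]
    simp only [fullTypeAutomaton, Multiset.map_map, Function.comp_def, count_map_val,
      Multiset.card_map, Finset.card_val, fullType, Finset.image]
    rfl

variable {R V R' V'} in
theorem fullType_eq_of_unfolding_eq {n : ℕ} {w : W} {v : W'}
    (h : unfolding R V n w = unfolding R' V' n v) : fullType R V n w = fullType R' V' n v := by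
  have hrun := (fullTypeAutomaton P I).run_eq_of_unfolding_eq h
  rw [run_fullTypeAutomaton, run_fullTypeAutomaton] at hrun
  exact congrArg Prod.snd hrun

open Classical in
theorem sat_fullType_succ (n : ℕ) (w : W) (v : W') :
    GMML.Sat R V w (fullType R' V' (n + 1) v) ↔ {p | V p w} = {p | V' p v} ∧ ∀ α,
      (succs R α w).card = (succs R' α v).card ∧ ∀ x ∈ succs R' α v,
        ((succs R α w).filter fun u => GMML.Sat R V u (fullType R' V' n x)).card =
          ((succs R' α v).filter fun u => fullType R' V' n u = fullType R' V' n x).card := by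
  have hzero (α : I) (φ : GMML P I) : GMML.Sat R V w (.dia α 0 φ) := Nat.zero_le _
  have htop (α : I) : {u | R α w u ∧ GMML.Sat R V u .top}.ncard = (succs R α w).card := by
    simp only [ncard_rel_and_eq_card_filter_succs, GMML.Sat, Finset.filter_true]
  rw [fullType, GMML.Sat]
  simp only [sat_type0, GMML.sat_bigAnd, List.forall_mem_flatMap, List.forall_mem_cons,
    List.forall_mem_map, Finset.mem_toList, Finset.mem_univ, true_imp_iff, Finset.forall_mem_image,
    hzero, GMML.sat_diaEq, htop, true_and, ncard_rel_and_eq_card_filter_succs]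

theorem sat_fullType_iff (n : ℕ) (w : W) (v : W') :
    GMML.Sat R V w (fullType R' V' n v) ↔ unfolding R V n w = unfolding R' V' n v := by
  classical
  induction n generalizing W W' with
  | zero => exact sat_type0 R V V' w v
  | succ n ih =>
    have fullType_eq_iff (u x : W') : fullType R' V' n u = fullType R' V' n x ↔
        unfolding R' V' n u = unfolding R' V' n x := by
      refine ⟨fun h => ?_, fullType_eq_of_unfolding_eq⟩
      rw [← ih R' V', ← h, ih]
    simp only [sat_fullType_succ, ih, fullType_eq_iff, unfolding_succ_eq_iff,
      multiset_eq_iff_card_eq_and_count_eq, Multiset.card_map, Finset.card_val,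
      Multiset.forall_mem_map_iff, count_map_val, Finset.mem_val]

end

namespace PKModel

variable {P I : Type} [Fintype P] [Fintype I] {M N : PKModel P I} {n : ℕ}

theorem sat_fullType_self (M : PKModel P I) (n : ℕ) : M.Sat (M.fullType n) :=
  haveI := M.fin
  letI := Fintype.ofFinite M.W
  (sat_fullType_iff M.R M.V M.R M.V n M.pt M.pt).2 rfl

theorem run_eq_of_sat_fullType {Q : Type} (A : CMMPA P I Q) (h : M.Sat (N.fullType n)) :
    M.run A n M.pt = N.run A n N.pt :=
  haveI := M.fin
  haveI := N.fin
  letI := Fintype.ofFinite M.W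
  letI := Fintype.ofFinite N.W
  A.run_eq_of_unfolding_eq ((sat_fullType_iff M.R M.V N.R N.V n M.pt N.pt).1 h)

end PKModel

theorem recognizable_implies_definable_general {P I Q : Type} [Fintype P] [Fintype I]
    (A : CMMPA P I Q) :
    {τ : GMML P I | ∃ (N : PKModel P I) (n : ℕ),
        N.run A n N.pt ∈ A.F ∧ τ = N.fullType n}.Countable ∧
    ∀ M : PKModel P I,
      (∃ t : ℕ, M.run A t M.pt ∈ A.F) ↔
        ∃ τ ∈ {τ : GMML P I | ∃ (N : PKModel P I) (n : ℕ),
            N.run A n N.pt ∈ A.F ∧ τ = N.fullType n}, M.Sat τ := by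
  refine ⟨Set.to_countable _, fun M => ⟨?_, ?_⟩⟩
  · rintro ⟨n, haccept⟩
    exact ⟨M.fullType n, ⟨M, n, haccept, rfl⟩, M.sat_fullType_self n⟩
  · rintro ⟨_, ⟨N, n, haccept, rfl⟩, hsat⟩
    exact ⟨n, PKModel.run_eq_of_sat_fullType A hsat ▸ haccept⟩

/-- every class of finite pointed models recognizable by a counting
multichannel message passing automaton is definable by the countable disjunction of
all full graded multimodal types `τ_n^{(M,w)}` of pointed models accepted in round `n`. -/
theorem recognizable_implies_definable {P I : Type} [Fintype P] [Fintype I]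
    (Q : Type) [Countable Q] (A : CMMPA P I Q) :
    {τ : GMML P I | ∃ (N : PKModel P I) (n : ℕ),
        N.run A n N.pt ∈ A.F ∧ τ = N.fullType n}.Countable ∧
    ∀ M : PKModel P I,
      (∃ t : ℕ, M.run A t M.pt ∈ A.F) ↔
        ∃ τ ∈ {τ : GMML P I | ∃ (N : PKModel P I) (n : ℕ),
            N.run A n N.pt ∈ A.F ∧ τ = N.fullType n}, M.Sat τ :=
  recognizable_implies_definable_general A
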